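/- arXiv:1902.02851 — 4 statements merged into one kernel-verified Lean document; each statement's English description precedes it below -/
import Mathlib

section
/- Let v_max, v_obs ≥ 0 and set v_rel = v_max + v_obs (the maximum relative speed between the robot and any obstacle). Let ε ≥ 0 be the maximum spatial estimation error, let τ_plan > 0 be the planning time and t_f > 0 the planning horizon, and suppose the sensor horizon satisfies δ_sense ≥ (t_f + τ_plan)·v_rel + 2ε. Let x₀ ∈ ℝ² be the robot's measured initial position and let r : [0, τ_plan + t_f] → ℝ² be the robot's true position, satisfying ‖r(t) − x₀‖ ≤ v_max·t + ε for all t ∈ [0, τ_plan] and ‖r(t) − r(τ_plan)‖ ≤ v_max·(t − τ_plan) + ε for all t ∈ [τ_plan, τ_plan + t_f]. Let o : [0, τ_plan + t_f] → ℝ² be v_obs-Lipschitz (an obstacle trajectory) with ‖x₀ − o(0)‖ > δ_sense. Then r(t) ≠ o(t) for every t ∈ [τ_plan, τ_plan + t_f]; i.e., no obstacle lying farther than δ_sense from the robot at the current time can cause a collision during the next plan. -/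
/-!
The clearance between robot and obstacle starts above `δ_sense`. Up to time `t` the robot consumes
at most `v_max * t + 2 * ε` of it, one `ε` for each of the two planning segments, and the obstacle
at most `v_obs * t`. Since `t ≤ t_f + τ_plan`, the sensor horizon leaves a positive remainder.
-/

section PseudoMetricSpace

variable {X : Type*} [PseudoMetricSpace X]

theorem dist_sub_add_le_dist {x y p q : X} {a b : ℝ} (hp : dist p x ≤ a) (hq : dist q y ≤ b) :
    dist x y - (a + b) ≤ dist p q := by
  have hxy : dist x y ≤ dist p x + dist p q + dist q y := by
    simpa only [dist_comm x p] using dist_triangle4 x p q y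
  linarith

theorem dist_le_mul_add_of_two_segments {x y z : X} {v s t ε₁ ε₂ : ℝ}
    (hyx : dist y x ≤ v * s + ε₁) (hzy : dist z y ≤ v * (t - s) + ε₂) :
    dist z x ≤ v * t + (ε₁ + ε₂) :=
  calc
    dist z x ≤ dist z y + dist y x := dist_triangle z y x
    _ ≤ (v * (t - s) + ε₂) + (v * s + ε₁) := add_le_add hzy hyx
    _ = v * t + (ε₁ + ε₂) := by ring

theorem dist_left_le_mul_sub {f : ℝ → X} {K a b t : ℝ}
    (hf : ∀ s ∈ Set.Icc a b, ∀ t ∈ Set.Icc a b, dist (f t) (f s) ≤ K * |t - s|)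
    (ht : t ∈ Set.Icc a b) : dist (f t) (f a) ≤ K * (t - a) := by
  simpa only [abs_of_nonneg (sub_nonneg.mpr ht.1)] using
    hf a (Set.left_mem_Icc.mpr (ht.1.trans ht.2)) t ht

theorem sensor_horizon_general {v_max v_obs ε τ_plan t_f δ_sense : ℝ}
    (hv_rel : 0 ≤ v_max + v_obs)
    (hδ : (t_f + τ_plan) * (v_max + v_obs) + 2 * ε ≤ δ_sense)
    {x₀ : X} {r o : ℝ → X}
    (hr₁ : dist (r τ_plan) x₀ ≤ v_max * τ_plan + ε)
    (hr₂ : ∀ t ∈ Set.Icc τ_plan (τ_plan + t_f),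
      dist (r t) (r τ_plan) ≤ v_max * (t - τ_plan) + ε)
    (ho : ∀ t ∈ Set.Icc τ_plan (τ_plan + t_f), dist (o t) (o 0) ≤ v_obs * t)
    (hfar : δ_sense < dist x₀ (o 0)) :
    ∀ t ∈ Set.Icc τ_plan (τ_plan + t_f), 0 < dist (r t) (o t) := by
  intro t ht
  have robot_drift : dist (r t) x₀ ≤ v_max * t + (ε + ε) :=
    dist_le_mul_add_of_two_segments hr₁ (hr₂ t ht)
  have clearance : dist x₀ (o 0) - (v_max * t + (ε + ε) + v_obs * t) ≤ dist (r t) (o t) :=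
    dist_sub_add_le_dist robot_drift (ho t ht)
  have relative_motion : t * (v_max + v_obs) ≤ (t_f + τ_plan) * (v_max + v_obs) :=
    mul_le_mul_of_nonneg_right (ht.2.trans_eq (add_comm _ _)) hv_rel
  linarith

end PseudoMetricSpace

/-- **Minimum sensor horizon** (Theorem 1 of RTD-D):
if the sensor horizon satisfies `δ_sense ≥ (t_f + τ_plan)·v_rel + 2ε` with
`v_rel = v_max + v_obs`, then no obstacle lying farther than `δ_sense` from the
robot's measured position at the current time can collide with the robot at any
time in `[τ_plan, τ_plan + t_f]`. -/
theorem sensor_horizon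
    (v_max v_obs ε τ_plan t_f δ_sense : ℝ)
    (hv_max : 0 ≤ v_max) (hv_obs : 0 ≤ v_obs) (hε : 0 ≤ ε)
    (hτ_plan : 0 < τ_plan) (ht_f : 0 < t_f)
    (hδ : (t_f + τ_plan) * (v_max + v_obs) + 2 * ε ≤ δ_sense)
    (x₀ : EuclideanSpace ℝ (Fin 2))
    (r o : ℝ → EuclideanSpace ℝ (Fin 2))
    -- during the current plan, the robot stays within `v_max·t + ε` of its measured state
    (hr₁ : ∀ t ∈ Set.Icc 0 τ_plan, ‖r t - x₀‖ ≤ v_max * t + ε)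
    -- during the next plan, the robot stays within `v_max·(t − τ_plan) + ε` of its
    -- state at the start of that plan
    (hr₂ : ∀ t ∈ Set.Icc τ_plan (τ_plan + t_f),
      ‖r t - r τ_plan‖ ≤ v_max * (t - τ_plan) + ε)
    -- the obstacle trajectory is `v_obs`-Lipschitz
    (ho : ∀ s ∈ Set.Icc 0 (τ_plan + t_f), ∀ t ∈ Set.Icc 0 (τ_plan + t_f),
      ‖o t - o s‖ ≤ v_obs * |t - s|)
    -- the obstacle is farther than the sensor horizon at the current time
    (hfar : δ_sense < ‖x₀ - o 0‖) :
    ∀ t ∈ Set.Icc τ_plan (τ_plan + t_f), r t ≠ o t := by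
  simp only [← dist_eq_norm] at hr₁ hr₂ ho hfar
  have obstacle_drift : ∀ t ∈ Set.Icc τ_plan (τ_plan + t_f), dist (o t) (o 0) ≤ v_obs * t :=
    fun t ht => by
      simpa only [sub_zero] using dist_left_le_mul_sub ho ⟨hτ_plan.le.trans ht.1, ht.2⟩
  exact fun t ht => dist_pos.mp <| sensor_horizon_general (add_nonneg hv_max hv_obs) hδ
    (hr₁ τ_plan ⟨hτ_plan.le, le_rfl⟩) hr₂ obstacle_drift hfar t ht
end

section
/- Let v_max, v_obs ≥ 0 with v_rel = v_max + v_obs > 0, and let b_t > 0 be a temporal buffer. Let t₁ < t₂ with t₂ − t₁ ≤ 2·b_t / v_rel. Let r : [t₁, t₂] → ℝ² be v_max-Lipschitz (the robot's position) and o : [t₁, t₂] → ℝ² be v_obs-Lipschitz (an obstacle's position). If ‖r(t₁) − o(t₁)‖ > b_t and ‖r(t₂) − o(t₂)‖ > b_t, then r(t) ≠ o(t) for every t ∈ [t₁, t₂]; i.e., clearance greater than b_t at the two endpoint times of a sufficiently short interval precludes a collision anywhere in the interval. -/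
/-!
The distance between two curves with speeds at most `K` and `L` changes at rate at most `K + L`.
Comparing its value at an intermediate time with both endpoint values and adding the two estimates
lets the elapsed times add up to the length of the interval, whatever the intermediate time; this
is where the factor `2` in `2 * b_t / v_rel` comes from.
-/

open Set
open scoped NNReal

theorem dist_le_dist_add_of_lipschitzOnWith {α X : Type*} [PseudoMetricSpace α]
    [PseudoMetricSpace X] {K L : ℝ≥0} {f g : α → X} {s : Set α}
    (hf : LipschitzOnWith K f s) (hg : LipschitzOnWith L g s) {x y : α} (hx : x ∈ s)
    (hy : y ∈ s) :
    dist (f x) (g x) ≤ dist (f y) (g y) + (K + L) * dist x y :=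
  calc
    dist (f x) (g x) ≤ dist (f x) (f y) + dist (f y) (g y) + dist (g y) (g x) :=
      dist_triangle4 ..
    _ ≤ K * dist x y + dist (f y) (g y) + L * dist y x := by
      gcongr
      exacts [hf.dist_le_mul x hx y hy, hg.dist_le_mul y hy x hx]
    _ = dist (f y) (g y) + (K + L) * dist x y := by
      rw [dist_comm y x]
      ring

theorem dist_add_dist_le_of_lipschitzOnWith_Icc {X : Type*} [PseudoMetricSpace X] {K L : ℝ≥0}
    {f g : ℝ → X} {a b t : ℝ} (hf : LipschitzOnWith K f (Icc a b))
    (hg : LipschitzOnWith L g (Icc a b)) (ht : t ∈ Icc a b) :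
    dist (f a) (g a) + dist (f b) (g b) ≤ 2 * dist (f t) (g t) + (K + L) * (b - a) := by
  have hab : a ≤ b := ht.1.trans ht.2
  have left := dist_le_dist_add_of_lipschitzOnWith hf hg (left_mem_Icc.2 hab) ht
  have right := dist_le_dist_add_of_lipschitzOnWith hf hg (right_mem_Icc.2 hab) ht
  rw [dist_comm a t, Real.dist_eq, abs_of_nonneg (sub_nonneg.2 ht.1)] at left
  rw [Real.dist_eq, abs_of_nonneg (sub_nonneg.2 ht.2)] at right
  linarith

theorem not_at_fault_short_interval_general {X : Type*} [PseudoMetricSpace X]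
    {v_max v_obs : ℝ≥0} {b_t t₁ t₂ : ℝ} (hv_rel : (0 : ℝ) < v_max + v_obs)
    (hstep : t₂ - t₁ ≤ 2 * b_t / (v_max + v_obs)) {r o : ℝ → X}
    (hr : LipschitzOnWith v_max r (Icc t₁ t₂)) (ho : LipschitzOnWith v_obs o (Icc t₁ t₂))
    (h₁ : b_t < dist (r t₁) (o t₁)) (h₂ : b_t < dist (r t₂) (o t₂)) :
    ∀ t ∈ Icc t₁ t₂, 0 < dist (r t) (o t) := by
  intro t ht
  have clearance := dist_add_dist_le_of_lipschitzOnWith_Icc hr ho ht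
  have relative_travel : (v_max + v_obs) * (t₂ - t₁) ≤ 2 * b_t := (le_div_iff₀' hv_rel).1 hstep
  linarith

/-- **Not-at-fault on a short interval** (Lemma 9 of RTD-D):
if the robot (max speed `v_max`) and an obstacle (max speed `v_obs`) are both
farther than the temporal buffer `b_t` apart at the two endpoints `t₁ < t₂` of
an interval of length at most `τ_disc,max = 2·b_t / v_rel` with
`v_rel = v_max + v_obs`, then they do not collide anywhere in `[t₁, t₂]`. -/
theorem not_at_fault_short_interval
    (v_max v_obs b_t t₁ t₂ : ℝ)
    (hv_max : 0 ≤ v_max) (hv_obs : 0 ≤ v_obs)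
    (hv_rel : 0 < v_max + v_obs) (hb_t : 0 < b_t)
    (ht : t₁ < t₂) (hstep : t₂ - t₁ ≤ 2 * b_t / (v_max + v_obs))
    (r o : ℝ → EuclideanSpace ℝ (Fin 2))
    -- the robot's trajectory is `v_max`-Lipschitz on `[t₁, t₂]`
    (hr : ∀ s ∈ Set.Icc t₁ t₂, ∀ t ∈ Set.Icc t₁ t₂, ‖r t - r s‖ ≤ v_max * |t - s|)
    -- the obstacle's trajectory is `v_obs`-Lipschitz on `[t₁, t₂]`
    (ho : ∀ s ∈ Set.Icc t₁ t₂, ∀ t ∈ Set.Icc t₁ t₂, ‖o t - o s‖ ≤ v_obs * |t - s|)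
    -- clearance greater than `b_t` at both endpoint times
    (h₁ : b_t < ‖r t₁ - o t₁‖) (h₂ : b_t < ‖r t₂ - o t₂‖) :
    ∀ t ∈ Set.Icc t₁ t₂, r t ≠ o t := by
  lift v_max to ℝ≥0 using hv_max
  lift v_obs to ℝ≥0 using hv_obs
  exact fun t ht => dist_pos.1 <| not_at_fault_short_interval_general hv_rel hstep
    (lipschitzOnWith_iff_norm_sub_le.2 fun t ht s hs => hr s hs t ht)
    (lipschitzOnWith_iff_norm_sub_le.2 fun t ht s hs => ho s hs t ht)
    (by rwa [dist_eq_norm]) (by rwa [dist_eq_norm]) t ht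
end

section
/- Let v_max, v_obs ≥ 0 with v_rel = v_max + v_obs > 0, let b_t > 0 be a temporal buffer, and let t_f > 0. Define the maximum time discretization τ_max = 2·b_t / v_rel, the number of prediction times n = ⌈t_f / τ_max⌉, and the time step τ = t_f / n. Let r : [0, t_f] → ℝ² be v_max-Lipschitz (the robot's position) and o : [0, t_f] → ℝ² be v_obs-Lipschitz (an obstacle's position). If ‖r(j·τ) − o(j·τ)‖ > b_t for every j ∈ {0, 1, …, n}, then r(t) ≠ o(t) for every t ∈ [0, t_f]; i.e., clearance greater than b_t at the finitely many discretized times guarantees no collision over the entire horizon. -/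
/-
Two moving points approach each other at relative speed at most `v_rel`, so their distance is a
`v_rel`-Lipschitz function of time. Every time in the horizon is within `τ / 2` of a grid time, and
between the two the distance drops by at most `v_rel * τ / 2`. The choice of `n` makes
`τ ≤ 2 * b_t / v_rel`, so this drop is at most the buffer `b_t`.
-/

open Set
open scoped NNReal

section NearestGridPoint

variable {R : Type*} [Field R] [LinearOrder R] [IsStrictOrderedRing R] [FloorRing R] {n : ℕ}

theorem exists_nat_le_abs_sub_le_half {x : R} (hx : x ∈ Icc 0 (n : R)) :
    ∃ j ≤ n, |x - j| ≤ 1 / 2 := by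
  have round_nonneg : 0 ≤ round x := by
    rw [round_eq]
    exact Int.floor_nonneg.2 (add_nonneg hx.1 one_half_pos.le)
  have round_le : round x ≤ n := by
    rw [← round_natCast (α := R) n, round_eq, round_eq]
    gcongr
    exact hx.2
  lift round x to ℕ using round_nonneg with j hj
  refine ⟨j, mod_cast round_le, ?_⟩
  simpa only [← hj, Int.cast_natCast] using abs_sub_round x

theorem exists_nat_le_abs_sub_mul_le_half {τ t : R} (hτ : 0 < τ) (ht : t ∈ Icc 0 (n * τ)) :
    ∃ j ≤ n, |t - j * τ| ≤ τ / 2 := by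
  have ht_div : t / τ ∈ Icc 0 (n : R) := ⟨div_nonneg ht.1 hτ.le, (div_le_iff₀ hτ).2 ht.2⟩
  obtain ⟨j, hjn, hj⟩ := exists_nat_le_abs_sub_le_half ht_div
  refine ⟨j, hjn, ?_⟩
  calc |t - j * τ| = |(t / τ - j) * τ| := by rw [sub_mul, div_mul_cancel₀ t hτ.ne']
    _ = |t / τ - j| * τ := by rw [abs_mul, abs_of_pos hτ]
    _ ≤ 1 / 2 * τ := by gcongr
    _ = τ / 2 := one_div_mul_eq_div 2 τ

end NearestGridPoint

theorem lipschitzOnWith_dist {α X : Type*} [PseudoMetricSpace α] [PseudoMetricSpace X]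
    {K L : ℝ≥0} {f g : α → X} {s : Set α} (hf : LipschitzOnWith K f s)
    (hg : LipschitzOnWith L g s) :
    LipschitzOnWith (K + L) (fun x ↦ dist (f x) (g x)) s :=
  .of_dist_le_mul fun x hx y hy ↦
    calc dist (dist (f x) (g x)) (dist (f y) (g y))
      _ ≤ dist (f x) (f y) + dist (g x) (g y) := dist_dist_dist_le ..
      _ ≤ K * dist x y + L * dist x y :=
        add_le_add (hf.dist_le_mul x hx y hy) (hg.dist_le_mul x hx y hy)
      _ = (K + L : ℝ≥0) * dist x y := by rw [NNReal.coe_add, add_mul]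

theorem lt_of_lipschitzOnWith_of_forall_grid_lt {K : ℝ≥0} {f : ℝ → ℝ} {n : ℕ} {τ b c : ℝ}
    (hτ : 0 < τ) (hf : LipschitzOnWith K f (Icc 0 (n * τ))) (hb : K * (τ / 2) ≤ b)
    (hgrid : ∀ j : ℕ, j ≤ n → c + b < f (j * τ)) {t : ℝ} (ht : t ∈ Icc 0 (n * τ)) :
    c < f t := by
  obtain ⟨j, hjn, hj⟩ := exists_nat_le_abs_sub_mul_le_half hτ ht
  have hj_mem : j * τ ∈ Icc 0 (n * τ) := ⟨by positivity, by gcongr⟩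
  have drop_le : f (j * τ) ≤ f t + b :=
    calc f (j * τ) ≤ f t + K * dist (j * τ) t := hf.le_add_mul hj_mem ht
      _ ≤ f t + K * (τ / 2) := by
        gcongr
        rwa [dist_comm, Real.dist_eq]
      _ ≤ f t + b := by gcongr
  linarith [hgrid j hjn]

theorem not_at_fault_time_discretization_general {X : Type*} [PseudoMetricSpace X]
    {v_max v_obs : ℝ≥0} {b_t t_f c : ℝ} {n : ℕ} {τ : ℝ} (hv_rel : 0 < (v_max + v_obs : ℝ))
    (hb_t : 0 < b_t) (ht_f : 0 < t_f) (hn : t_f / (2 * b_t / (v_max + v_obs)) ≤ n)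
    (hτ : τ = t_f / n) {r o : ℝ → X} (hr : LipschitzOnWith v_max r (Icc 0 t_f))
    (ho : LipschitzOnWith v_obs o (Icc 0 t_f))
    (hclear : ∀ j : ℕ, j ≤ n → c + b_t < dist (r (j * τ)) (o (j * τ))) :
    ∀ t ∈ Icc 0 t_f, c < dist (r t) (o t) := by
  have τ_max_pos : 0 < 2 * b_t / (v_max + v_obs : ℝ) := by positivity
  have n_pos : 0 < (n : ℝ) := (div_pos ht_f τ_max_pos).trans_le hn
  have τ_pos : 0 < τ := hτ ▸ div_pos ht_f n_pos
  have τ_le : τ ≤ 2 * b_t / (v_max + v_obs) := hτ ▸ (div_le_comm₀ τ_max_pos n_pos).1 hn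
  have horizon_eq : t_f = n * τ := by rw [hτ, mul_div_cancel₀ _ n_pos.ne']
  have drop_le : ((v_max + v_obs : ℝ≥0) : ℝ) * (τ / 2) ≤ b_t := by
    rw [le_div_iff₀ hv_rel] at τ_le
    push_cast
    linarith
  rw [horizon_eq] at hr ho ⊢
  exact fun t ht ↦
    lt_of_lipschitzOnWith_of_forall_grid_lt τ_pos (lipschitzOnWith_dist hr ho) drop_le hclear ht

/-- **Not-at-fault for all time via time discretization** (Theorem 10 of RTD-D):
with maximum time discretization `τ_max = 2·b_t / v_rel`, number of prediction
times `n = ⌈t_f / τ_max⌉` and time step `τ = t_f / n`, clearance greater than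
the temporal buffer `b_t` at each of the finitely many times `j·τ`,
`j = 0, …, n`, guarantees no collision over the whole horizon `[0, t_f]`. -/
theorem not_at_fault_time_discretization
    (v_max v_obs b_t t_f : ℝ) (n : ℕ) (τ : ℝ)
    (hv_max : 0 ≤ v_max) (hv_obs : 0 ≤ v_obs)
    (hv_rel : 0 < v_max + v_obs) (hb_t : 0 < b_t) (ht_f : 0 < t_f)
    (hn : n = ⌈t_f / (2 * b_t / (v_max + v_obs))⌉₊)
    (hτ : τ = t_f / n)
    (r o : ℝ → EuclideanSpace ℝ (Fin 2))
    -- the robot's trajectory is `v_max`-Lipschitz on `[0, t_f]`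
    (hr : ∀ s ∈ Set.Icc 0 t_f, ∀ t ∈ Set.Icc 0 t_f, ‖r t - r s‖ ≤ v_max * |t - s|)
    -- the obstacle's trajectory is `v_obs`-Lipschitz on `[0, t_f]`
    (ho : ∀ s ∈ Set.Icc 0 t_f, ∀ t ∈ Set.Icc 0 t_f, ‖o t - o s‖ ≤ v_obs * |t - s|)
    -- clearance greater than `b_t` at every discretized time
    (hclear : ∀ j : ℕ, j ≤ n → b_t < ‖r (j * τ) - o (j * τ)‖) :
    ∀ t ∈ Set.Icc 0 t_f, r t ≠ o t :=
  fun t ht ↦ dist_pos.1 <| not_at_fault_time_discretization_general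
    (v_max := ⟨v_max, hv_max⟩) (v_obs := ⟨v_obs, hv_obs⟩) hv_rel hb_t ht_f (hn ▸ Nat.le_ceil _) hτ
    (lipschitzOnWith_iff_norm_sub_le.2 fun x hx y hy ↦ hr y hy x hx)
    (lipschitzOnWith_iff_norm_sub_le.2 fun x hx y hy ↦ ho y hy x hx)
    (by simpa only [zero_add, dist_eq_norm] using hclear) t ht
end

section
/- Let R > 0, b ∈ (0, R/2), and r = 2·√(b·(2R − b)). Let S ⊂ ℝ² be a closed segment contained in a line ℓ, and let A ⊆ S be a finite set containing both endpoints of S such that consecutive points of A along S are at distance at most r from one another. Let D be a closed disk of radius R whose center is at distance at most R − b from ℓ, and suppose the chord D ∩ ℓ is contained in S. Then D contains a point of A. -/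
/-!
If a point `q` of the segment lies between two samples `a`, `a'` with `dist a a' ≤ r`, then by
Stewart's theorem a weighted average of `dist c a ^ 2` and `dist c a' ^ 2` equals
`dist c q ^ 2 + dist a q * dist a' q`, which is at most `dist c q ^ 2 + (r / 2) ^ 2`; hence so is
one of the two squares. With `dist c q ≤ R - b` and `r = 2 * √(b * (2 * R - b))` the bound is
`R ^ 2`. Such a `q` exists by compactness: points of the line whose distance to `c` is close to the
infimum, which is at most `R - b < R`, lie in the disk, hence in its chord, hence on the segment.
-/

theorem infDist_le_of_closedBall_inter_subset {X : Type*} [PseudoMetricSpace X] {c : X}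
    {s t : Set X} {ρ R : ℝ} (ht : t.Nonempty) (hρ : Metric.infDist c t ≤ ρ) (hρR : ρ < R)
    (hts : Metric.closedBall c R ∩ t ⊆ s) : Metric.infDist c s ≤ ρ := by
  refine le_of_forall_gt fun d hd ↦ ?_
  obtain ⟨y, hyt, hy⟩ := (Metric.infDist_lt_iff ht).mp (hρ.trans_lt (lt_min hd hρR))
  have hys : y ∈ s := hts ⟨Metric.mem_closedBall'.mpr (hy.le.trans (min_le_right d R)), hyt⟩
  exact (Metric.infDist_le_dist_of_mem hys).trans_lt (hy.trans_le (min_le_left d R))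

section Normed

variable {V P : Type*} [NormedAddCommGroup V] [NormedSpace ℝ V] [MetricSpace P]
  [NormedAddTorsor V P] {e₁ e₂ q : P} {A : Finset P} {r : ℝ}

theorem isCompact_affineSegment (x y : P) : IsCompact (affineSegment ℝ x y) :=
  isCompact_Icc.image AffineMap.lineMap_continuous

theorem wbtw_of_dist_left_le {x y z : P} (hx : Wbtw ℝ e₁ x e₂) (hy : Wbtw ℝ e₁ y e₂)
    (hz : Wbtw ℝ e₁ z e₂) (hxy : dist e₁ x ≤ dist e₁ y) (hyz : dist e₁ y ≤ dist e₁ z) :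
    Wbtw ℝ x y z := by
  obtain ⟨s, hs, rfl⟩ := hx
  obtain ⟨t, ht, rfl⟩ := hy
  obtain ⟨u, hu, rfl⟩ := hz
  rcases eq_or_ne e₁ e₂ with rfl | he
  · simp only [AffineMap.lineMap_same_apply, wbtw_self_left]
  · simp only [dist_left_lineMap, Real.norm_of_nonneg hs.1, Real.norm_of_nonneg ht.1,
      Real.norm_of_nonneg hu.1, mul_le_mul_iff_left₀ (dist_pos.mpr he)] at hxy hyz
    exact (Wbtw.of_le_of_le hxy hyz).map _

/-- A discretization of the segment from `e₁` to `e₂` with point spacing at most `r`: from every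
sampled point other than `e₂` one reaches, by a step of length at most `r`, a sampled point farther
from `e₁`. As `A` is finite, such steps can only end at `e₂`, which is therefore sampled. -/
structure IsSegmentSampling (A : Finset P) (e₁ e₂ : P) (r : ℝ) : Prop where
  subset : ↑A ⊆ affineSegment ℝ e₁ e₂
  left_mem : e₁ ∈ A
  exists_next : ∀ a ∈ A, a ≠ e₂ → ∃ a' ∈ A, dist e₁ a < dist e₁ a' ∧ dist a a' ≤ r

theorem IsSegmentSampling.exists_wbtw (hA : IsSegmentSampling A e₁ e₂ r) (hr : 0 ≤ r)
    (hq : Wbtw ℝ e₁ q e₂) : ∃ a ∈ A, ∃ a' ∈ A, Wbtw ℝ a q a' ∧ dist a a' ≤ r := by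
  obtain ⟨a, ha, ha_max⟩ := (A.filter fun x ↦ dist e₁ x ≤ dist e₁ q).exists_max_image (dist e₁)
    ⟨e₁, Finset.mem_filter.mpr ⟨hA.left_mem, by simp only [dist_self, dist_nonneg]⟩⟩
  obtain ⟨haA, haq⟩ := Finset.mem_filter.mp ha
  rcases eq_or_ne a e₂ with rfl | hae
  · have hqa : dist e₁ q ≤ dist e₁ a :=
      (le_add_of_nonneg_right dist_nonneg).trans_eq hq.dist_add_dist
    exact ⟨a, haA, a, haA, wbtw_of_dist_left_le (hA.subset haA) hq (hA.subset haA) haq hqa,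
      (dist_self a).trans_le hr⟩
  · obtain ⟨a', ha'A, hlt, hstep⟩ := hA.exists_next a haA hae
    have hqa' : dist e₁ q < dist e₁ a' := by
      by_contra! h
      exact hlt.not_ge (ha_max a' (Finset.mem_filter.mpr ⟨ha'A, h⟩))
    exact ⟨a, haA, a', ha'A,
      wbtw_of_dist_left_le (hA.subset haA) hq (hA.subset ha'A) haq hqa'.le, hstep⟩

end Normed

section Inner

variable {V P : Type*} [NormedAddCommGroup V] [InnerProductSpace ℝ V] [MetricSpace P]
  [NormedAddTorsor V P] {e₁ e₂ q : P} {A : Finset P} {r : ℝ}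

theorem sq_min_dist_le_of_wbtw (c : P) {a a' : P} (h : Wbtw ℝ a q a') :
    min (dist c a) (dist c a') ^ 2 ≤ dist c q ^ 2 + (dist a a' / 2) ^ 2 := by
  have hmin_nonneg : 0 ≤ min (dist c a) (dist c a') := le_min dist_nonneg dist_nonneg
  have hmin_left : min (dist c a) (dist c a') ^ 2 ≤ dist c a ^ 2 :=
    pow_le_pow_left₀ hmin_nonneg (min_le_left _ _) 2
  have hmin_right : min (dist c a) (dist c a') ^ 2 ≤ dist c a' ^ 2 :=
    pow_le_pow_left₀ hmin_nonneg (min_le_right _ _) 2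
  rcases eq_or_ne q a with rfl | hqa
  · exact hmin_left.trans (le_add_of_nonneg_right (sq_nonneg _))
  rcases eq_or_ne q a' with rfl | hqa'
  · exact hmin_right.trans (le_add_of_nonneg_right (sq_nonneg _))
  have hstewart := EuclideanGeometry.dist_sq_mul_dist_add_dist_sq_mul_dist c a a' q
    (Sbtw.angle₁₂₃_eq_pi ⟨h, hqa, hqa'⟩)
  have hsum : dist a q + dist a' q = dist a a' := dist_comm q a' ▸ h.dist_add_dist
  have hpos : 0 < dist a a' := hsum ▸ add_pos (dist_pos.mpr hqa.symm) (dist_pos.mpr hqa'.symm)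
  refine le_of_mul_le_mul_left ?_ hpos
  calc dist a a' * min (dist c a) (dist c a') ^ 2
      = min (dist c a) (dist c a') ^ 2 * dist a' q
        + min (dist c a) (dist c a') ^ 2 * dist a q := by rw [← hsum]; ring
    _ ≤ dist c a ^ 2 * dist a' q + dist c a' ^ 2 * dist a q := by gcongr
    _ = dist a a' * (dist c q ^ 2 + dist a q * dist a' q) := hstewart
    _ ≤ dist a a' * (dist c q ^ 2 + (dist a a' / 2) ^ 2) := by
      gcongr
      rw [← hsum]
      linarith [sq_nonneg (dist a q - dist a' q)]

theorem IsSegmentSampling.exists_dist_sq_le (hA : IsSegmentSampling A e₁ e₂ r) (hr : 0 ≤ r)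
    (hq : Wbtw ℝ e₁ q e₂) (c : P) :
    ∃ a ∈ A, dist c a ^ 2 ≤ dist c q ^ 2 + (r / 2) ^ 2 := by
  obtain ⟨a, ha, a', ha', hqaa', hstep⟩ := hA.exists_wbtw hr hq
  have hmin : min (dist c a) (dist c a') ^ 2 ≤ dist c q ^ 2 + (r / 2) ^ 2 :=
    (sq_min_dist_le_of_wbtw c hqaa').trans (by gcongr)
  rcases min_choice (dist c a) (dist c a') with h | h
  · exact ⟨a, ha, h ▸ hmin⟩
  · exact ⟨a', ha', h ▸ hmin⟩

theorem disk_contains_sample_point_general {R b : ℝ} (hb : 0 ≤ b) {c : P}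
    (hA : IsSegmentSampling A e₁ e₂ (2 * √(b * (2 * R - b))))
    (hc : Metric.infDist c (affineSegment ℝ e₁ e₂) ≤ R - b) :
    ∃ a ∈ A, a ∈ Metric.closedBall c R := by
  obtain ⟨q, hq, hcq⟩ := (isCompact_affineSegment e₁ e₂).exists_infDist_eq_dist
    ⟨e₁, left_mem_affineSegment ℝ e₁ e₂⟩ c
  rw [hcq] at hc
  have hbR : b ≤ R := sub_nonneg.mp (dist_nonneg.trans hc)
  obtain ⟨a, ha, hca⟩ := hA.exists_dist_sq_le (by positivity) hq c
  refine ⟨a, ha, Metric.mem_closedBall'.mpr ((sq_le_sq₀ dist_nonneg (hb.trans hbR)).mp ?_)⟩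
  calc dist c a ^ 2 ≤ dist c q ^ 2 + (2 * √(b * (2 * R - b)) / 2) ^ 2 := hca
    _ ≤ (R - b) ^ 2 + b * (2 * R - b) := by
      rw [mul_div_cancel_left₀ _ two_ne_zero, Real.sq_sqrt (mul_nonneg hb (by linarith))]
      gcongr
    _ = R ^ 2 := by ring

end Inner

/-- **Correctness of the discretized obstacle representation** (circular
footprint): let `S` be the closed segment from `e₁` to `e₂`, lying in the line
`ℓ`, sampled by a finite set `A ⊆ S` that contains both endpoints and whose
consecutive points along `S` are spaced at most `r = 2·√(b·(2R − b))` apart.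
If a closed disk `D` of radius `R` has its center at distance at most `R − b`
from `ℓ` (with `b ∈ (0, R/2)`) and its chord `D ∩ ℓ` is contained in `S`, then
`D` contains one of the sampled points. -/
theorem disk_contains_sample_point
    (R b r : ℝ) (hR : 0 < R) (hb : b ∈ Set.Ioo 0 (R / 2))
    (hr : r = 2 * Real.sqrt (b * (2 * R - b)))
    (e₁ e₂ c : EuclideanSpace ℝ (Fin 2)) (he : e₁ ≠ e₂)
    (S ℓ D : Set (EuclideanSpace ℝ (Fin 2)))
    -- `S` is the closed segment from `e₁` to `e₂`, contained in the line `ℓ`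
    (hS : S = segment ℝ e₁ e₂)
    (hℓ : ℓ = {x | ∃ t : ℝ, x = e₁ + t • (e₂ - e₁)})
    (A : Finset (EuclideanSpace ℝ (Fin 2)))
    (hA : ↑A ⊆ S) (he₁ : e₁ ∈ A) (he₂ : e₂ ∈ A)
    -- consecutive points of `A` along `S` are at distance at most `r`:
    -- after every sampled point other than `e₂` there is a sampled point
    -- strictly farther from `e₁`, at distance at most `r`
    (hconsec : ∀ a ∈ A, a ≠ e₂ →
      ∃ a' ∈ A, dist e₁ a < dist e₁ a' ∧ dist a a' ≤ r)
    -- `D` is the closed disk of radius `R` centered at `c`, whose center is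
    -- at distance at most `R − b` from `ℓ`
    (hD : D = Metric.closedBall c R)
    (hdist : Metric.infDist c ℓ ≤ R - b)
    -- the chord `D ∩ ℓ` is contained in `S`
    (hchord : D ∩ ℓ ⊆ S) :
    ∃ a ∈ A, a ∈ D := by
  subst hr hS hD
  rw [← affineSegment_eq_segment] at hA hchord
  have hℓ_nonempty : ℓ.Nonempty := ⟨e₁, hℓ ▸ ⟨0, by simp only [zero_smul, add_zero]⟩⟩
  exact disk_contains_sample_point_general hb.1.le ⟨hA, he₁, hconsec⟩
    (infDist_le_of_closedBall_inter_subset hℓ_nonempty hdist (sub_lt_self R hb.1) hchord)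
end
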